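/- In K(2) the identity 3·z(4,{1,2}) = z(3,{1})·z(2,{2}) + z(2,{1})·z(3,{2}) holds. -/

import Mathlib

/-!
Write `x₀, x₁, x₂` for the classes of the variables in `A`. The first two relations make the first
two elementary symmetric functions vanish, so every `xᵢ³` equals `t = x₀ x₁ x₂`, and for `i ≠ j`,
with `k` the third index, `xᵢ² xⱼ + xᵢ xⱼ² = xᵢ xⱼ (xᵢ + xⱼ) = - xᵢ xⱼ xₖ = -t`
(`pair_coeff` and `cube_eq`).

Let `eᵢ`, `fᵢ` be the degree-one generators of the two exterior factors. The right-hand side is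
`∑ᵢⱼ (xᵢ² xⱼ + xᵢ xⱼ²) ⊗ eᵢ fⱼ`, which becomes
`t ⊗ (3 ∑ᵢ eᵢ fᵢ - (∑ᵢ eᵢ) (∑ⱼ fⱼ)) = 3 t ⊗ ∑ᵢ eᵢ fᵢ` because `∑ᵢ eᵢ = 0`
(`eGen_sum`); this is the left-hand side. The computation in the tensor product is
`tensor_identity`.
-/

set_option synthInstance.maxHeartbeats 1000000
set_option maxHeartbeats 1000000

open MvPolynomial
open scoped TensorProduct

noncomputable section

abbrev P3 : Type := MvPolynomial (Fin 3) ℚ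

def Jid : Ideal P3 :=
  Ideal.span {X 0 + X 1 + X 2, X 0 ^ 2 + X 1 ^ 2 + X 2 ^ 2, X 0 ^ 6 + X 1 ^ 6 + X 2 ^ 6}

abbrev Aq : Type := P3 ⧸ Jid

def mkA : P3 →ₐ[ℚ] Aq := Ideal.Quotient.mkₐ ℚ Jid

lemma rename_sum_pow (σ : Equiv.Perm (Fin 3)) (k : ℕ) :
    rename σ ((X 0 : P3) ^ k + X 1 ^ k + X 2 ^ k) = (X 0 : P3) ^ k + X 1 ^ k + X 2 ^ k := by
  have h : ((X 0 : P3) ^ k + X 1 ^ k + X 2 ^ k) = ∑ i, (X i : P3) ^ k := by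
    simp [Fin.sum_univ_three]
  rw [h, map_sum]
  simp only [map_pow, rename_X]
  exact Fintype.sum_equiv σ _ _ fun i => rfl

lemma rename_mem_J (σ : Equiv.Perm (Fin 3)) {p : P3} (hp : p ∈ Jid) :
    rename σ p ∈ Jid := by
  have hle : Jid.map (rename σ : P3 →ₐ[ℚ] P3).toRingHom ≤ Jid := by
    rw [Jid, Ideal.map_span, Ideal.span_le]
    rintro q ⟨r, hr, rfl⟩
    simp only [Set.mem_insert_iff, Set.mem_singleton_iff] at hr
    have h1 := rename_sum_pow σ 1
    simp only [pow_one] at h1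
    rcases hr with rfl | rfl | rfl
    · exact Ideal.subset_span (by simp only [AlgHom.toRingHom_eq_coe, RingHom.coe_coe, h1]; left; rfl)
    · exact Ideal.subset_span (by
        simp only [AlgHom.toRingHom_eq_coe, RingHom.coe_coe, rename_sum_pow σ 2]
        right; left; rfl)
    · exact Ideal.subset_span (by
        simp only [AlgHom.toRingHom_eq_coe, RingHom.coe_coe, rename_sum_pow σ 6]
        right; right; rfl)
  exact hle (Ideal.mem_map_of_mem _ hp)

def permAq (σ : Equiv.Perm (Fin 3)) : Aq →ₐ[ℚ] Aq :=
  Ideal.Quotient.liftₐ Jid (mkA.comp (rename σ)) (fun p hp => by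
    simp only [AlgHom.comp_apply, mkA, Ideal.Quotient.mkₐ_eq_mk]
    exact Ideal.Quotient.eq_zero_iff_mem.mpr (rename_mem_J σ hp))

def negP : P3 →ₐ[ℚ] P3 := aeval (fun i => -X i)

lemma negP_mem_J {p : P3} (hp : p ∈ Jid) : negP p ∈ Jid := by
  have hle : Jid.map negP.toRingHom ≤ Jid := by
    rw [Jid, Ideal.map_span, Ideal.span_le]
    rintro q ⟨r, hr, rfl⟩
    simp only [Set.mem_insert_iff, Set.mem_singleton_iff] at hr
    rcases hr with rfl | rfl | rfl
    · have : negP ((X 0 : P3) + X 1 + X 2) = -(X 0 + X 1 + X 2) := by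
        simp [negP]; try ring
      simp only [AlgHom.toRingHom_eq_coe, RingHom.coe_coe, this]
      exact neg_mem (Ideal.subset_span (by left; rfl))
    · have : negP ((X 0 : P3) ^ 2 + X 1 ^ 2 + X 2 ^ 2) = X 0 ^ 2 + X 1 ^ 2 + X 2 ^ 2 := by
        simp [negP]; try ring
      simp only [AlgHom.toRingHom_eq_coe, RingHom.coe_coe, this]
      exact Ideal.subset_span (by right; left; rfl)
    · have : negP ((X 0 : P3) ^ 6 + X 1 ^ 6 + X 2 ^ 6) = X 0 ^ 6 + X 1 ^ 6 + X 2 ^ 6 := by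
        simp [negP]; try ring
      simp only [AlgHom.toRingHom_eq_coe, RingHom.coe_coe, this]
      exact Ideal.subset_span (by right; right; rfl)
  exact hle (Ideal.mem_map_of_mem _ hp)

def negAq : Aq →ₐ[ℚ] Aq :=
  Ideal.Quotient.liftₐ Jid (mkA.comp negP) (fun p hp => by
    simp only [AlgHom.comp_apply, mkA, Ideal.Quotient.mkₐ_eq_mk]
    exact Ideal.Quotient.eq_zero_iff_mem.mpr (negP_mem_J hp))

def Vsub : Submodule ℚ (Fin 3 → ℚ) := Submodule.span ℚ {fun _ => (1 : ℚ)}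

abbrev Vq : Type := (Fin 3 → ℚ) ⧸ Vsub

def vGen (i : Fin 3) : Vq := Submodule.Quotient.mk (Pi.single i 1)

abbrev Em (m : ℕ) : Type := ExteriorAlgebra ℚ (Fin m → Vq)

def eGen (m : ℕ) (j : Fin m) (i : Fin 3) : Em m :=
  ExteriorAlgebra.ι ℚ (Pi.single j (vGen i))

def prodGen (m : ℕ) (i : Fin 3) (I : Finset (Fin m)) : Em m :=
  ((I.sort (· ≤ ·)).map (fun j => eGen m j i)).prod

def extHom {m : ℕ} (g : (Fin m → Vq) →ₗ[ℚ] (Fin m → Vq)) : Em m →ₐ[ℚ] Em m :=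
  ExteriorAlgebra.lift ℚ ⟨(ExteriorAlgebra.ι ℚ).comp g, fun v => by
    simpa using ExteriorAlgebra.ι_sq_zero (g v)⟩

def permV (σ : Equiv.Perm (Fin 3)) : Vq →ₗ[ℚ] Vq :=
  Submodule.mapQ Vsub Vsub (LinearMap.funLeft ℚ ℚ ⇑σ⁻¹) (by
    rw [Vsub, Submodule.span_le]
    rintro v rfl
    exact Submodule.mem_comap.mpr (Submodule.subset_span rfl))

abbrev Kk (m : ℕ) : Type := Aq ⊗[ℚ] Em m

def zz (m : ℕ) (d : ℕ) (I : Finset (Fin m)) : Kk m :=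
  mkA (X 0 ^ d) ⊗ₜ[ℚ] prodGen m 0 I + mkA (X 1 ^ d) ⊗ₜ[ℚ] prodGen m 1 I +
    mkA (X 2 ^ d) ⊗ₜ[ℚ] prodGen m 2 I

def zS (m : ℕ) (i : ℕ) (I : Finset (Fin m)) : Kk m := zz m (i - 1) I

lemma eGen_sum (m : ℕ) (j : Fin m) : eGen m j 0 + eGen m j 1 + eGen m j 2 = 0 := by
  have h : vGen 0 + vGen 1 + vGen 2 = 0 := by
    have h1 : vGen 0 + vGen 1 + vGen 2
        = Submodule.Quotient.mk (p := Vsub) (fun _ => (1 : ℚ)) := by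
      simp only [vGen, ← Submodule.Quotient.mk_add]
      congr 1
      funext i
      fin_cases i <;> simp
    rw [h1, Submodule.Quotient.mk_eq_zero]
    exact Submodule.subset_span rfl
  simp only [eGen, ← map_add, ← Pi.single_add, h, Pi.single_zero, map_zero]

lemma sum_X : mkA (X 0) + mkA (X 1) + mkA (X 2) = 0 := by
  rw [← map_add, ← map_add]
  exact Ideal.Quotient.eq_zero_iff_mem.mpr (Ideal.subset_span (by left; rfl))

lemma sum_X_sq : mkA (X 0) ^ 2 + mkA (X 1) ^ 2 + mkA (X 2) ^ 2 = 0 := by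
  simp only [← map_pow, ← map_add]
  exact Ideal.Quotient.eq_zero_iff_mem.mpr (Ideal.subset_span (by right; left; rfl))

/-- The off-diagonal coefficients are all `-xyw`. -/
lemma pair_coeff {R : Type*} [CommRing R] {x y w : R} (h : x + y + w = 0) :
    x ^ 2 * y + x * y ^ 2 = -(x * y * w) := by
  linear_combination x * y * h

/-- Vanishing of the first two power sums forces `x ^ 3 = x * y * w`; the factor `2` relating
`x² + y² + w²` to the second elementary symmetric function has to be inverted. -/
lemma cube_eq {R : Type*} [CommRing R] [Algebra ℚ R] {x y w : R} (h : x + y + w = 0)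
    (h2 : x ^ 2 + y ^ 2 + w ^ 2 = 0) : x ^ 3 = x * y * w := by
  have key : (2 : ℚ) • (x ^ 3 - x * y * w) = 0 := by
    rw [ofNat_smul_eq_nsmul, nsmul_eq_mul]
    push_cast
    linear_combination x * h2 + (x ^ 2 - x * y - x * w) * h
  rcases smul_eq_zero.mp key with h0 | h0
  · norm_num at h0
  · exact sub_eq_zero.mp h0

/-- The identity for arbitrary coefficients `x, y, w` and arbitrary triples `e`, `f`, where only
`e` needs to sum to zero. -/
lemma tensor_identity {R E : Type*} [CommRing R] [Algebra ℚ R] [Ring E] [Algebra ℚ E]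
    {x y w : R} (h : x + y + w = 0) (h2 : x ^ 2 + y ^ 2 + w ^ 2 = 0)
    {e₀ e₁ e₂ f₀ f₁ f₂ : E} (he : e₀ + e₁ + e₂ = 0) :
    3 * ((x ^ 3) ⊗ₜ[ℚ] (e₀ * f₀) + (y ^ 3) ⊗ₜ[ℚ] (e₁ * f₁) + (w ^ 3) ⊗ₜ[ℚ] (e₂ * f₂)) =
      ((x ^ 2) ⊗ₜ[ℚ] e₀ + (y ^ 2) ⊗ₜ[ℚ] e₁ + (w ^ 2) ⊗ₜ[ℚ] e₂) *
        (x ⊗ₜ[ℚ] f₀ + y ⊗ₜ[ℚ] f₁ + w ⊗ₜ[ℚ] f₂) +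
      (x ⊗ₜ[ℚ] e₀ + y ⊗ₜ[ℚ] e₁ + w ⊗ₜ[ℚ] e₂) *
        ((x ^ 2) ⊗ₜ[ℚ] f₀ + (y ^ 2) ⊗ₜ[ℚ] f₁ + (w ^ 2) ⊗ₜ[ℚ] f₂) := by
  obtain ⟨t, ht⟩ : ∃ t, t = x * y * w := ⟨_, rfl⟩
  have hx : x ^ 3 = t := ht ▸ cube_eq h h2
  have hy : y ^ 3 = t := by
    rw [cube_eq (x := y) (y := x) (w := w) (by linear_combination h) (by linear_combination h2), ht]
    ring
  have hw : w ^ 3 = t := by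
    rw [cube_eq (x := w) (y := x) (w := y) (by linear_combination h) (by linear_combination h2), ht]
    ring
  have hxy : x * y ^ 2 = -t - x ^ 2 * y := by linear_combination pair_coeff h + ht
  have hyx : y * x ^ 2 = -t - y ^ 2 * x := by linear_combination pair_coeff h + ht
  have hxw : x * w ^ 2 = -t - x ^ 2 * w := by
    linear_combination pair_coeff (x := x) (y := w) (w := y) (by linear_combination h) + ht
  have hwx : w * x ^ 2 = -t - w ^ 2 * x := by linear_combination hxw
  have hyw : y * w ^ 2 = -t - y ^ 2 * w := by
    linear_combination pair_coeff (x := y) (y := w) (w := x) (by linear_combination h) + ht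
  have hwy : w * y ^ 2 = -t - w ^ 2 * y := by linear_combination hyw
  have he₂ : e₂ = -e₀ - e₁ := sub_eq_zero.mp (by rw [← he]; abel)
  have h3 : (3 : R ⊗[ℚ] E) = 1 + 1 + 1 := by norm_num
  simp only [h3, add_mul, mul_add, one_mul, Algebra.TensorProduct.tmul_mul_tmul, hxy, hyx, hxw,
    hwx, hyw, hwy, ← pow_succ, ← pow_succ', Nat.reduceAdd, hx, hy, hw, TensorProduct.sub_tmul,
    TensorProduct.neg_tmul]
  subst he₂
  simp only [sub_mul, neg_mul, TensorProduct.tmul_sub, TensorProduct.tmul_neg]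
  abel

/-- In `K(2)` (indices shifted: the paper's `{1,2}` is `{0,1}` here):
`3·z(4,{1,2}) = z(3,{1})·z(2,{2}) + z(2,{1})·z(3,{2})`. -/
theorem three_z4_identity :
    3 * zS 2 4 {0, 1} = zS 2 3 {0} * zS 2 2 {1} + zS 2 2 {0} * zS 2 3 {1} := by
  have hsort : ({0, 1} : Finset (Fin 2)).sort (· ≤ ·) = [0, 1] := by
    rw [Finset.sort_insert _ (by simp) (by simp), Finset.sort_singleton]
  have hpair (i : Fin 3) : prodGen 2 i {0, 1} = eGen 2 0 i * eGen 2 1 i := by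
    simp [prodGen, hsort]
  have hsingle (i : Fin 3) (j : Fin 2) : prodGen 2 i {j} = eGen 2 j i := by
    simp [prodGen]
  simp only [zS, zz, hpair, hsingle, map_pow, Nat.reduceSub, pow_one]
  exact tensor_identity sum_X sum_X_sq (eGen_sum 2 0)

end
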